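/- Let n ≥ 2 be an integer, Γ = ℝ × {0, 1, …, n−1}, and let Λ ⊂ ℝ² be a closed set that is 2-periodic with respect to the second variable. If the set Π̃_su(Λ) = Π^n(Λ) ∪ (Π^1(Λ) \ Π^{1*}(Λ)) ∪ (Π^{n−1}(Λ) \ Π^{(n−1)*}(Λ)) ∪ ⋃_{j=2}^{n−2} (Π^j(Λ) \ Π^{j*}_{su}(Λ)) is dense in ℝ, then (Γ, Λ) is a Heisenberg uniqueness pair. -/

import Mathlib

open MeasureTheory Complex

/-- Fourier transform with the convention `f̂(ξ) = ∫ e^{πixξ} f(x) dx`. -/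
noncomputable def FT (f : ℝ → ℂ) (ξ : ℝ) : ℂ :=
  ∫ x : ℝ, Complex.exp (Real.pi * Complex.I * x * ξ) * f x

/-- `e^{πiη}`. -/
noncomputable def cexpEta (η : ℝ) : ℂ := Complex.exp (Real.pi * Complex.I * η)

/-- `Λ` is 2-periodic with respect to the second variable. -/
def Periodic2 (Λ : Set (ℝ × ℝ)) : Prop :=
  ∀ ξ η : ℝ, (ξ, η) ∈ Λ ↔ (ξ, η + 2) ∈ Λ

/-- The projection `Π(Λ)` of `Λ` on the x-axis. -/
def proj (Λ : Set (ℝ × ℝ)) : Set ℝ := {ξ | ∃ η : ℝ, (ξ, η) ∈ Λ}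

/-- `Img(ξ) = {η ∈ [0,2) : (ξ,η) ∈ Λ}`. -/
def Img (Λ : Set (ℝ × ℝ)) (ξ : ℝ) : Set ℝ := {η | η ∈ Set.Ico (0 : ℝ) 2 ∧ (ξ, η) ∈ Λ}

/-- `Π^k(Λ)` for `k < n`: points of `Π(Λ)` whose `Img` has exactly `k` elements. -/
def projExact (Λ : Set (ℝ × ℝ)) (k : ℕ) : Set ℝ :=
  {ξ | ξ ∈ proj Λ ∧ (Img Λ ξ).encard = k}

/-- `Π^n(Λ)`: points of `Π(Λ)` whose `Img` has at least `n` elements. -/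
def projAtLeast (Λ : Set (ℝ × ℝ)) (n : ℕ) : Set ℝ :=
  {ξ | ξ ∈ proj Λ ∧ (n : ℕ∞) ≤ (Img Λ ξ).encard}

/-- `ψ ∈ P^{E,ξ}_l` : there are an open interval `I ∋ ξ` and `φ_1,…,φ_{l-1} ∈ L¹(ℝ)` with
`φ̂_1 + φ̂_2 ψ + ⋯ + φ̂_{l-1} ψ^{l-2} + ψ^{l-1} = 0` on `I ∩ E`. -/
def Pmem (E : Set ℝ) (ξ : ℝ) (l : ℕ) (ψ : ℝ → ℂ) : Prop :=
  ∃ a b : ℝ, ξ ∈ Set.Ioo a b ∧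
    ∃ φ : Fin (l - 1) → ℝ → ℂ, (∀ i, Integrable (φ i)) ∧
      ∀ x ∈ Set.Ioo a b ∩ E,
        (∑ i : Fin (l - 1), FT (φ i) x * ψ x ^ (i : ℕ)) + ψ x ^ (l - 1) = 0

/-- `Π^{1*}(Λ)`: those `ξ ∈ Π^1(Λ)` such that `χ ∈ P^{Π^1(Λ),ξ}_n`, where
`χ(ξ') = e^{πiη}` with `η` the unique element of `Img(ξ')`. -/
def projOneStar (Λ : Set (ℝ × ℝ)) (n : ℕ) : Set ℝ :=
  {ξ | ξ ∈ projExact Λ 1 ∧ ∃ χ : ℝ → ℂ,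
    (∀ ξ' ∈ projExact Λ 1, ∀ η ∈ Img Λ ξ', χ ξ' = cexpEta η) ∧
    Pmem (projExact Λ 1) ξ n χ}

/-- `Π^{k*}_{su}(Λ)`. -/
def projStarSu (Λ : Set (ℝ × ℝ)) (n k : ℕ) : Set ℝ :=
  {ξ | ξ ∈ projExact Λ k ∧ ∃ a b : ℝ, ξ ∈ Set.Ioo a b ∧
    ∃ φ : Fin (n - 1) → ℝ → ℂ, (∀ i, Integrable (φ i)) ∧
      ∀ ξ' ∈ Set.Ioo a b ∩ projExact Λ k, ∀ η ∈ Img Λ ξ',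
        (∑ i : Fin (n - 1), FT (φ i) ξ' * cexpEta η ^ (i : ℕ)) = -(cexpEta η ^ (n - 1))}

/-- `Π^{k*}_{ne}(Λ)` for `k ≥ 2`. -/
def projStarNe (Λ : Set (ℝ × ℝ)) (k : ℕ) : Set ℝ :=
  {ξ | ξ ∈ projExact Λ k ∧ ∃ a b : ℝ, ξ ∈ Set.Ioo a b ∧
    ∃ φ : Fin k → ℝ → ℂ, (∀ i, Integrable (φ i)) ∧
      ∀ ξ' ∈ Set.Ioo a b ∩ projExact Λ k, ∀ η ∈ Img Λ ξ',
        (∑ i : Fin k, FT (φ i) ξ' * cexpEta η ^ (i : ℕ)) = -(cexpEta η ^ k)}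

/-- `(Γ, Λ)` with `Γ = ℝ × {0,…,n-1}` is a Heisenberg uniqueness pair: every admissible
measure `μ = Σ_m (x ↦ (x,m))_*(f_m dx)` (with each `f_m ∈ L¹(ℝ)`) whose Fourier transform
`μ̂(ξ,η) = Σ_m e^{mπiη} f̂_m(ξ)` vanishes on `Λ` must be zero, i.e. each `f_m = 0` a.e. -/
def IsHUP (n : ℕ) (Λ : Set (ℝ × ℝ)) : Prop :=
  ∀ f : Fin n → ℝ → ℂ, (∀ m, Integrable (f m)) →
    (∀ ξ η : ℝ, (ξ, η) ∈ Λ → ∑ m : Fin n, cexpEta η ^ (m : ℕ) * FT (f m) ξ = 0) →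
    ∀ m, f m =ᵐ[volume] (0 : ℝ → ℂ)

/-!
If `μ̂` vanishes on `Λ`, then over each `ξ ∈ Π(Λ)` the polynomial `∑ m, f̂_m(ξ) z ^ m` vanishes at
every `z = e^{πiη}` with `η ∈ Img(ξ)`. Suppose that its leading coefficient is nonzero at `ξ`. Then
`Img(ξ)` has fewer than `n` elements, and Wiener's lemma lets one divide by the leading coefficient
near `ξ` without leaving the Fourier transforms of `L¹` functions, so `ξ` is a starred point.
Hence the leading coefficient vanishes on a dense set, so everywhere by continuity, and `n` drops
by one.

For Wiener's lemma at the origin, let `û(0) = 1` and take `χ ∈ L¹` with `χ̂ = 1` near `0`, dilated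
until `‖χ - u * χ‖ < 1`. The Neumann series then solves `φ = h + (χ - u * χ) * φ`, and where
`χ̂ = 1` this says `φ̂ = ĥ + (1 - û) φ̂`, that is `û φ̂ = ĥ`.
-/

open Filter
open scoped FourierTransform Topology RealInnerProductSpace ContDiff

section WienerLemma

variable {V : Type*} [NormedAddCommGroup V] [InnerProductSpace ℝ V] [FiniteDimensional ℝ V]
  [MeasurableSpace V] [BorelSpace V] {E : Type*} [NormedAddCommGroup E] [NormedSpace ℂ E]

theorem fourier_toL1 {f : V → E} (hf : Integrable f) : 𝓕 (hf.toL1 f : V → E) = 𝓕 f :=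
  funext (Real.fourier_congr_ae hf.coeFn_toL1)

theorem continuous_fourier_of_integrable {f : V → E} (hf : Integrable f) : Continuous (𝓕 f) :=
  VectorFourier.fourierIntegral_continuous Real.continuous_fourierChar continuous_inner hf

theorem integral_fourier_smul_eq_of_integrable [CompleteSpace E] {f : V → ℂ} {g : V → E}
    (hf : Integrable f) (hg : Integrable g) : ∫ ξ, 𝓕 f ξ • g ξ = ∫ x, f x • 𝓕 g x := by
  simpa only [flip_innerₗ] using! VectorFourier.integral_fourierIntegral_smul_eq_flip
    (L := innerₗ V) Real.continuous_fourierChar continuous_inner hf hg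

theorem ae_eq_zero_of_fourier_eq_zero [CompleteSpace E] {f : V → E} (hf : Integrable f)
    (h : 𝓕 f = 0) : f =ᵐ[volume] 0 := by
  suffices hf.toL1 f = 0 from
    (Integrable.toL1_eq_toL1_iff f 0 hf (integrable_zero V E volume)).1 this
  rw [← Submodule.mem_bot ℂ, ← Lp.ker_toTemperedDistributionCLM_eq_bot, LinearMap.mem_ker]
  ext g
  have h_swap := integral_fourier_smul_eq_of_integrable (𝓕⁻ g).integrable hf
  rw [h, ← SchwartzMap.fourier_coe, FourierTransform.fourier_fourierInv_eq] at h_swap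
  calc _ = ∫ x, g x • hf.toL1 f x := Lp.toTemperedDistribution_apply _ g
    _ = ∫ x, g x • f x := integral_congr_ae (hf.coeFn_toL1.mono fun x hx ↦ by simp only [hx])
    _ = 0 := by simpa using h_swap

theorem fourier_const_smul (c : ℂ) (f : V → E) : 𝓕 (c • f) = c • 𝓕 f :=
  VectorFourier.fourierIntegral_const_smul _ _ _ _ _

theorem integrable_modulation {f : V → E} (hf : Integrable f) (a : V) :
    Integrable fun x ↦ Real.fourierChar (-⟪x, a⟫) • f x :=
  (Real.fourierIntegral_convergent_iff a).2 hf

theorem fourier_modulation (f : V → E) (a ξ : V) :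
    𝓕 (fun x ↦ Real.fourierChar (-⟪x, a⟫) • f x) ξ = 𝓕 f (ξ + a) := by
  simp only [Real.fourier_eq, smul_smul, ← AddChar.map_add_eq_mul, inner_add_right, neg_add]

theorem integral_pow_smul_comp_smul {F : Type*} [NormedAddCommGroup F] [NormedSpace ℝ F]
    (f : V → F) {s : ℝ} (hs : 0 < s) :
    ∫ x, s ^ Module.finrank ℝ V • f (s • x) = ∫ x, f x := by
  rw [integral_smul, Measure.integral_comp_smul_of_nonneg _ _ _ (hR := hs.le),
    smul_inv_smul₀ (pow_pos hs _).ne']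

theorem fourier_pow_smul_comp_smul (f : V → E) {s : ℝ} (hs : 0 < s) (ξ : V) :
    𝓕 (fun x ↦ s ^ Module.finrank ℝ V • f (s • x)) ξ = 𝓕 f (s⁻¹ • ξ) := by
  rw [Real.fourier_eq, Real.fourier_eq,
    ← integral_pow_smul_comp_smul (fun x ↦ Real.fourierChar (-⟪x, s⁻¹ • ξ⟫) • f x) hs]
  congr with x
  rw [smul_comm, real_inner_smul_left, real_inner_smul_right, mul_inv_cancel_left₀ hs.ne']

theorem exists_schwartzMap_fourier_eventuallyEq_one :
    ∃ χ : SchwartzMap V ℂ, ∀ᶠ ξ in 𝓝 0, 𝓕 (χ : V → ℂ) ξ = 1 := by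
  let b : ContDiffBump (0 : V) := ⟨1, 2, one_pos, one_lt_two⟩
  have hb_supp : HasCompactSupport (Complex.ofRealCLM ∘ b) := b.hasCompactSupport.comp_left rfl
  have hb_smooth : ContDiff ℝ ∞ (Complex.ofRealCLM ∘ b) :=
    Complex.ofRealCLM.contDiff.comp b.contDiff
  refine ⟨𝓕⁻ (hb_supp.toSchwartzMap hb_smooth), ?_⟩
  rw [← SchwartzMap.fourier_coe, FourierTransform.fourier_fourierInv_eq]
  filter_upwards [b.eventuallyEq_one] with ξ hξ
  simp [hξ]

/-- Translation `F ↦ F (· - y)` as a linear isometry of `L¹(V)`. -/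
noncomputable def translateL1 (y : V) : (V →₁[volume] E) →ₗᵢ[ℂ] (V →₁[volume] E) :=
  Lp.compMeasurePreservingₗᵢ ℂ (· - y) (measurePreserving_sub_right volume y)

theorem coeFn_translateL1 (y : V) (F : V →₁[volume] E) :
    translateL1 y F =ᵐ[volume] fun x ↦ F (x - y) :=
  Lp.coeFn_compMeasurePreserving F (measurePreserving_sub_right volume y)

theorem translateL1_zero (F : V →₁[volume] E) : translateL1 0 F = F :=
  Lp.ext (by simpa using coeFn_translateL1 0 F)

theorem continuous_translateL1 (F : V →₁[volume] E) : Continuous fun y ↦ translateL1 y F := by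
  let sub : C(V, C(V, V)) := (ContinuousMap.mk (fun a : V × V ↦ a.2 - a.1) (by fun_prop)).curry
  exact continuous_const.compMeasurePreservingLp sub.continuous
    (fun y ↦ measurePreserving_sub_right volume y) ENNReal.one_ne_top

theorem fourier_translateL1 (y : V) (F : V →₁[volume] E) (ξ : V) :
    𝓕 (translateL1 y F : V → E) ξ = Real.fourierChar (-⟪y, ξ⟫) • 𝓕 (F : V → E) ξ := by
  rw [Real.fourier_congr_ae (coeFn_translateL1 y F)]
  simpa [sub_eq_add_neg, Function.comp_def] using! congrFun
    (VectorFourier.fourierIntegral_comp_add_right Real.fourierChar volume (innerₗ V)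
      (F : V → E) (-y)) ξ

theorem norm_sub_translateL1_toL1 {f : V → E} (hf : Integrable f volume) (y : V) :
    ‖hf.toL1 f - translateL1 y (hf.toL1 f)‖ = ∫ x, ‖f x - f (x - y)‖ := by
  have h_translate : translateL1 y (hf.toL1 f) =
      (hf.comp_sub_right y).toL1 fun x ↦ f (x - y) :=
    Lp.toLp_compMeasurePreserving _ (measurePreserving_sub_right volume y)
  rw [h_translate, ← Integrable.toL1_sub, L1.norm_of_fun_eq_integral_norm]
  rfl

theorem integrable_smul_translateL1 (u : V →₁[volume] ℂ) (F : V →₁[volume] E) :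
    Integrable fun y ↦ u y • translateL1 y F := by
  refine (L1.integrable_coeFn u).smul_bdd ‖F‖
    (continuous_translateL1 F).aestronglyMeasurable ?_
  exact .of_forall fun y ↦ ((translateL1 y).norm_map F).le

theorem norm_integral_smul_translateL1_le (u : V →₁[volume] ℂ) (F : V →₁[volume] E) :
    ‖∫ y, u y • translateL1 y F‖ ≤ ‖u‖ * ‖F‖ := by
  refine (norm_integral_le_integral_norm _).trans_eq ?_
  simp_rw [norm_smul, LinearIsometry.norm_map]
  rw [integral_mul_const, L1.norm_eq_integral_norm u]

/-- Convolution `F ↦ u * F` by `u ∈ L¹(V)` as a bounded operator on `L¹(V)`, encoded as the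
`L¹`-valued Bochner integral of the translates of `F` so that no Fubini argument is needed. -/
noncomputable def convL1 (u : V →₁[volume] ℂ) : (V →₁[volume] E) →L[ℂ] (V →₁[volume] E) :=
  LinearMap.mkContinuous
    { toFun F := ∫ y, u y • translateL1 y F
      map_add' F G := by
        simp_rw [map_add, smul_add]
        exact integral_add (integrable_smul_translateL1 u F) (integrable_smul_translateL1 u G)
      map_smul' c F := by
        simp_rw [map_smul, smul_comm _ c]
        exact integral_smul c _ }
    ‖u‖ (norm_integral_smul_translateL1_le u)

theorem convL1_apply (u : V →₁[volume] ℂ) (F : V →₁[volume] E) :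
    convL1 u F = ∫ y, u y • translateL1 y F := rfl

theorem norm_convL1_le (u : V →₁[volume] ℂ) : ‖convL1 (E := E) u‖ ≤ ‖u‖ :=
  LinearMap.mkContinuous_norm_le _ (norm_nonneg u) _

theorem fourier_convL1 [CompleteSpace E] (u : V →₁[volume] ℂ) (F : V →₁[volume] E) (ξ : V) :
    𝓕 (convL1 u F : V → E) ξ = 𝓕 (u : V → ℂ) ξ • 𝓕 (F : V → E) ξ := by
  let evalFourier : (V →₁[volume] E) →L[ℂ] E :=
    (BoundedContinuousFunction.evalCLM ℂ ξ).comp (Real.Lp.fourierTransformCLM V E)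
  calc 𝓕 (convL1 u F : V → E) ξ = ∫ y, evalFourier (u y • translateL1 y F) :=
        (evalFourier.integral_comp_comm (integrable_smul_translateL1 u F)).symm
    _ = ∫ y, (Real.fourierChar (-⟪y, ξ⟫) • u y) • 𝓕 (F : V → E) ξ := by
        congr with y
        rw [map_smul]
        change u y • 𝓕 (translateL1 y F : V → E) ξ = _
        rw [fourier_translateL1, smul_comm, smul_assoc]
    _ = 𝓕 (u : V → ℂ) ξ • 𝓕 (F : V → E) ξ := by
        rw [integral_smul_const, Real.fourier_eq (u : V → ℂ)]

theorem norm_sub_convL1_le [CompleteSpace E] {u : V →₁[volume] ℂ} (hu : ∫ y, u y = 1)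
    (F : V →₁[volume] E) :
    ‖F - convL1 u F‖ ≤ ∫ y, ‖u y‖ * ‖F - translateL1 y F‖ := by
  have h_average : F - convL1 u F = ∫ y, u y • (F - translateL1 y F) := by
    simp_rw [smul_sub]
    rw [integral_sub ((L1.integrable_coeFn u).smul_const F) (integrable_smul_translateL1 u F),
      integral_smul_const, hu, one_smul, convL1_apply]
  rw [h_average]
  exact (norm_integral_le_integral_norm _).trans_eq (by simp_rw [norm_smul])

theorem tendsto_integral_norm_sub_translateL1 (u : V →₁[volume] ℂ) (F : V →₁[volume] E) :
    Tendsto (fun s : ℝ ↦ ∫ y, ‖u y‖ * ‖F - translateL1 (s • y) F‖) (𝓝 0) (𝓝 0) := by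
  have h_cont : Continuous fun y ↦ ‖F - translateL1 y F‖ :=
    (continuous_const.sub (continuous_translateL1 F)).norm
  have h_bound (y : V) : ‖F - translateL1 y F‖ ≤ ‖F‖ + ‖F‖ :=
    (norm_sub_le _ _).trans_eq (by rw [LinearIsometry.norm_map])
  have h_int : Continuous fun s : ℝ ↦ ∫ y, ‖u y‖ * ‖F - translateL1 (s • y) F‖ := by
    refine continuous_of_dominated (bound := fun y ↦ ‖u y‖ * (‖F‖ + ‖F‖))
      (fun s ↦ ?_) (fun s ↦ .of_forall fun y ↦ ?_)
      ((L1.integrable_coeFn u).norm.mul_const _) (.of_forall fun y ↦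
        continuous_const.mul (h_cont.comp (continuous_id.smul continuous_const)))
    · exact (L1.integrable_coeFn u).norm.aestronglyMeasurable.mul
        (h_cont.comp (continuous_const_smul s)).aestronglyMeasurable
    · rw [norm_mul, norm_norm, norm_norm]
      gcongr
      exact h_bound _
  simpa [translateL1_zero] using h_int.tendsto 0

theorem norm_sub_translateL1_toL1_dilate {f : V → E} {s : ℝ} (hs : 0 < s)
    (hf : Integrable f volume)
    (hfs : Integrable (fun x ↦ s ^ Module.finrank ℝ V • f (s • x)) volume) (y : V) :
    ‖hfs.toL1 _ - translateL1 y (hfs.toL1 _)‖ =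
      ‖hf.toL1 f - translateL1 (s • y) (hf.toL1 f)‖ := by
  rw [norm_sub_translateL1_toL1, norm_sub_translateL1_toL1,
    ← integral_pow_smul_comp_smul (fun x ↦ ‖f x - f (x - s • y)‖) hs]
  congr with x
  rw [← smul_sub s x y, ← smul_sub, norm_smul, Real.norm_of_nonneg (by positivity), smul_eq_mul]

theorem exists_norm_sub_convL1_lt_one {u : V →₁[volume] ℂ} (hu : ∫ y, u y = 1) :
    ∃ χ : V →₁[volume] ℂ, (∀ᶠ ξ in 𝓝 0, 𝓕 (χ : V → ℂ) ξ = 1) ∧ ‖χ - convL1 u χ‖ < 1 := by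
  obtain ⟨ψ, hψ⟩ := exists_schwartzMap_fourier_eventuallyEq_one (V := V)
  have h_small : ∀ᶠ s in 𝓝[>] (0 : ℝ), ∫ y, ‖u y‖ *
      ‖ψ.integrable.toL1 ψ - translateL1 (s • y) (ψ.integrable.toL1 ψ)‖ < 1 :=
    nhdsWithin_le_nhds
      ((tendsto_integral_norm_sub_translateL1 u _).eventually_lt_const one_pos)
  obtain ⟨s, hs_lt, hs⟩ := (h_small.and self_mem_nhdsWithin).exists
  have hψs : Integrable fun x ↦ s ^ Module.finrank ℝ V • ψ (s • x) :=
    (ψ.integrable.comp_smul (ne_of_gt hs)).smul (s ^ Module.finrank ℝ V)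
  refine ⟨hψs.toL1 _, ?_, (norm_sub_convL1_le hu _).trans_lt ?_⟩
  · have h_tendsto : Tendsto (fun ξ : V ↦ s⁻¹ • ξ) (𝓝 0) (𝓝 0) :=
      (continuous_const_smul s⁻¹).tendsto' 0 0 (smul_zero _)
    filter_upwards [h_tendsto.eventually hψ] with ξ hξ
    rw [fourier_toL1, fourier_pow_smul_comp_smul _ hs, hξ]
  · simpa only [norm_sub_translateL1_toL1_dilate hs ψ.integrable hψs] using hs_lt

theorem exists_eq_add_convL1 [CompleteSpace E] {k : V →₁[volume] ℂ} (hk : ‖k‖ < 1)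
    (h : V →₁[volume] E) : ∃ φ, φ = h + convL1 k φ := by
  obtain ⟨A, hA⟩ := isUnit_one_sub_of_norm_lt_one ((norm_convL1_le (E := E) k).trans_lt hk)
  refine ⟨(↑A⁻¹ : (V →₁[volume] E) →L[ℂ] (V →₁[volume] E)) h, ?_⟩
  have h_solve := DFunLike.congr_fun A.mul_inv h
  rw [hA] at h_solve
  exact sub_eq_iff_eq_add.1 h_solve

theorem fourier_sub_L1 (F G : V →₁[volume] E) :
    𝓕 (↑(F - G) : V → E) = 𝓕 (F : V → E) - 𝓕 (G : V → E) :=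
  congrArg DFunLike.coe (map_sub (Real.Lp.fourierTransformCLM V E) F G)

theorem fourier_add_L1 (F G : V →₁[volume] E) :
    𝓕 (↑(F + G) : V → E) = 𝓕 (F : V → E) + 𝓕 (G : V → E) :=
  congrArg DFunLike.coe (map_add (Real.Lp.fourierTransformCLM V E) F G)

theorem exists_fourier_smul_eventuallyEq_of_integral_eq_one [CompleteSpace E]
    {u : V →₁[volume] ℂ} (hu : ∫ y, u y = 1) (h : V →₁[volume] E) :
    ∃ φ : V →₁[volume] E,
      ∀ᶠ ξ in 𝓝 0, 𝓕 (u : V → ℂ) ξ • 𝓕 (φ : V → E) ξ = 𝓕 (h : V → E) ξ := by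
  obtain ⟨χ, hχ, hχ_lt⟩ := exists_norm_sub_convL1_lt_one hu
  obtain ⟨φ, hφ⟩ := exists_eq_add_convL1 hχ_lt h
  refine ⟨φ, hχ.mono fun ξ hξ ↦ ?_⟩
  have h_eq := congrArg (fun F : V →₁[volume] E ↦ 𝓕 (F : V → E) ξ) hφ
  simp only [fourier_add_L1, fourier_sub_L1, fourier_convL1, Pi.add_apply, Pi.sub_apply, hξ,
    smul_eq_mul, mul_one] at h_eq
  rwa [sub_smul, one_smul, ← add_sub_assoc, eq_sub_iff_add_eq, add_comm (𝓕 (h : V → E) ξ),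
    add_right_inj] at h_eq

theorem exists_fourier_smul_eventuallyEq_of_fourier_zero_ne [CompleteSpace E] {f : V → ℂ}
    {h : V → E} (hf : Integrable f) (hh : Integrable h) (h₀ : 𝓕 f 0 ≠ 0) :
    ∃ φ : V → E, Integrable φ ∧ ∀ᶠ ξ in 𝓝 0, 𝓕 f ξ • 𝓕 φ ξ = 𝓕 h ξ := by
  have hu : Integrable ((𝓕 f 0)⁻¹ • f) := hf.smul _
  have hu_one : ∫ y, hu.toL1 _ y = 1 := by
    calc ∫ y, hu.toL1 _ y = 𝓕 (hu.toL1 _ : V → ℂ) 0 := by simp [Real.fourier_eq]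
      _ = (𝓕 f 0)⁻¹ * 𝓕 f 0 := by rw [fourier_toL1, fourier_const_smul]; rfl
      _ = 1 := inv_mul_cancel₀ h₀
  obtain ⟨φ, hφ⟩ := exists_fourier_smul_eventuallyEq_of_integral_eq_one hu_one (hh.toL1 h)
  refine ⟨(𝓕 f 0)⁻¹ • φ, (L1.integrable_coeFn φ).smul _, hφ.mono fun ξ hξ ↦ ?_⟩
  simp only [fourier_toL1, fourier_const_smul, Pi.smul_apply] at hξ ⊢
  rwa [smul_comm, ← smul_assoc]

theorem exists_fourier_smul_eventuallyEq [CompleteSpace E] {f : V → ℂ} {h : V → E}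
    (hf : Integrable f) (hh : Integrable h) {ξ₀ : V} (h₀ : 𝓕 f ξ₀ ≠ 0) :
    ∃ φ : V → E, Integrable φ ∧ ∀ᶠ ξ in 𝓝 ξ₀, 𝓕 f ξ • 𝓕 φ ξ = 𝓕 h ξ := by
  obtain ⟨φ, hφ, h_eq⟩ := exists_fourier_smul_eventuallyEq_of_fourier_zero_ne
    (integrable_modulation hf ξ₀) (integrable_modulation hh ξ₀)
    (by rwa [fourier_modulation, zero_add])
  refine ⟨_, integrable_modulation hφ (-ξ₀), ?_⟩
  have h_shift : Tendsto (fun ξ ↦ ξ + -ξ₀) (𝓝 ξ₀) (𝓝 0) :=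
    (continuous_add_const (-ξ₀)).tendsto' ξ₀ 0 (add_neg_cancel ξ₀)
  filter_upwards [h_shift.eventually h_eq] with ξ hξ
  simpa only [fourier_modulation, neg_add_cancel_right] using hξ

end WienerLemma

theorem eq_zero_of_sum_pow_mul_eq_zero_of_le_encard {R : Type*} [CommRing R] [IsDomain R] {k : ℕ}
    {s : Set R} (hs : k ≤ s.encard) {c : Fin k → R}
    (hc : ∀ z ∈ s, ∑ i : Fin k, z ^ (i : ℕ) * c i = 0) : c = 0 := by
  obtain ⟨t, hts, ht⟩ := Set.exists_subset_encard_eq hs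
  have ht_fin : Finite t := Set.finite_of_encard_eq_coe ht
  have ht_card : Nat.card t = k := by simpa [Set.ncard] using congrArg ENat.toNat ht
  let e : Fin k ≃ t := (Finite.equivFinOfCardEq ht_card).symm
  exact Matrix.eq_zero_of_forall_index_sum_pow_mul_eq_zero
    (Subtype.val_injective.comp e.injective) fun j ↦ hc _ (hts (e j).2)

section HeisenbergUniqueness

theorem FT_eq_fourier (f : ℝ → ℂ) (ξ : ℝ) : FT f ξ = 𝓕 f (-ξ / 2) := by
  rw [Real.fourier_real_eq_integral_exp_smul, FT]
  congr with x
  rw [smul_eq_mul]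
  congr 2
  push_cast
  ring

theorem continuous_FT {f : ℝ → ℂ} (hf : Integrable f) : Continuous (FT f) := by
  have h_fourier := continuous_fourier_of_integrable hf
  rw [funext (FT_eq_fourier f)]
  fun_prop

theorem FT_zero : FT 0 = 0 := by
  funext ξ
  simp [FT]

theorem ae_eq_zero_of_FT_eq_zero {f : ℝ → ℂ} (hf : Integrable f) (h : FT f = 0) :
    f =ᵐ[volume] 0 := by
  refine ae_eq_zero_of_fourier_eq_zero hf (funext fun ξ ↦ ?_)
  simpa [FT_eq_fourier] using congrFun h (-2 * ξ)

theorem exists_FT_mul_eventuallyEq {f h : ℝ → ℂ} (hf : Integrable f) (hh : Integrable h) {ξ : ℝ}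
    (h₀ : FT f ξ ≠ 0) :
    ∃ φ : ℝ → ℂ, Integrable φ ∧ ∀ᶠ x in 𝓝 ξ, FT f x * FT φ x = FT h x := by
  rw [FT_eq_fourier] at h₀
  obtain ⟨φ, hφ, h_eq⟩ := exists_fourier_smul_eventuallyEq hf hh h₀
  have h_scale : Continuous fun x : ℝ ↦ -x / 2 := by fun_prop
  refine ⟨φ, hφ, ?_⟩
  simpa only [FT_eq_fourier, smul_eq_mul] using (h_scale.tendsto ξ).eventually h_eq

theorem injOn_cexpEta : Set.InjOn cexpEta (Set.Ico 0 2) := by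
  intro x hx y hy hxy
  obtain ⟨k, hk⟩ := Complex.exp_eq_exp_iff_exists_int.1 hxy
  have h_eq : x = y + 2 * k := by
    have h_pi : (Real.pi : ℂ) * I ≠ 0 := by simp [Real.pi_ne_zero]
    have : (x : ℂ) = y + 2 * k := mul_left_cancel₀ h_pi (by linear_combination hk)
    exact_mod_cast this
  have hk_lt : (k : ℝ) < 1 := by linarith [hx.2, hy.1]
  have hk_gt : (-1 : ℝ) < k := by linarith [hx.1, hy.2]
  have hk_zero : k = 0 := by
    norm_cast at hk_lt hk_gt
    lia
  simpa [hk_zero] using h_eq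

/-- The Fourier transform of the measure on `ℝ × {0, …, k - 1}` with densities `f 0, …, f (k - 1)`
vanishes on `Λ`. -/
def FTVanishesOn {k : ℕ} (f : Fin k → ℝ → ℂ) (Λ : Set (ℝ × ℝ)) : Prop :=
  ∀ ξ η : ℝ, (ξ, η) ∈ Λ → ∑ m : Fin k, cexpEta η ^ (m : ℕ) * FT (f m) ξ = 0

theorem FTVanishesOn.FT_eq_zero_of_mem_projAtLeast {Λ : Set (ℝ × ℝ)} {k : ℕ}
    {f : Fin k → ℝ → ℂ} (hΛ : FTVanishesOn f Λ)
    {ξ : ℝ} (hξ : ξ ∈ projAtLeast Λ k) (m : Fin k) : FT (f m) ξ = 0 := by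
  have h_card : k ≤ (cexpEta '' Img Λ ξ).encard := by
    rw [(injOn_cexpEta.mono fun η hη ↦ hη.1).encard_image]
    exact hξ.2
  have h_zero := eq_zero_of_sum_pow_mul_eq_zero_of_le_encard h_card (c := fun m ↦ FT (f m) ξ)
    (Set.forall_mem_image.2 fun η hη ↦ hΛ ξ η hη.2)
  exact congrFun h_zero m

/-- Near `ξ`, the points `z = e^{πiη}` with `(x, η) ∈ Λ` are roots of a monic polynomial of degree
`k` whose coefficients are, as functions of `x`, Fourier transforms of integrable functions. -/
def HasMonicRelationNear (Λ : Set (ℝ × ℝ)) (k : ℕ) (ξ : ℝ) : Prop :=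
  ∃ φ : Fin k → ℝ → ℂ, (∀ i, Integrable (φ i)) ∧ ∀ᶠ x in 𝓝 ξ, ∀ η, (x, η) ∈ Λ →
    ∑ i : Fin k, FT (φ i) x * cexpEta η ^ (i : ℕ) = -(cexpEta η ^ k)

namespace HasMonicRelationNear

variable {Λ : Set (ℝ × ℝ)} {k l n : ℕ} {ξ : ℝ}

theorem succ (h : HasMonicRelationNear Λ k ξ) : HasMonicRelationNear Λ (k + 1) ξ := by
  obtain ⟨φ, hφ, h_eq⟩ := h
  refine ⟨Fin.cons 0 φ, Fin.cases (integrable_zero ℝ ℂ volume) hφ, ?_⟩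
  filter_upwards [h_eq] with x hx η hη
  have h_shift : ∑ i : Fin k, FT (φ i) x * cexpEta η ^ ((i : ℕ) + 1) =
      cexpEta η * ∑ i : Fin k, FT (φ i) x * cexpEta η ^ (i : ℕ) := by
    rw [Finset.mul_sum]
    exact Finset.sum_congr rfl fun i _ ↦ by ring
  simp only [Fin.sum_univ_succ, Fin.cons_zero, Fin.cons_succ, Fin.val_succ, h_shift, hx η hη,
    FT_zero, Pi.zero_apply]
  ring

theorem mono (h : HasMonicRelationNear Λ k ξ) (hkl : k ≤ l) : HasMonicRelationNear Λ l ξ :=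
  Nat.le_induction h (fun _ _ ↦ succ) l hkl

theorem of_leading_ne_zero {f : Fin (k + 1) → ℝ → ℂ} (hf : ∀ m, Integrable (f m))
    (hΛ : FTVanishesOn f Λ) (h₀ : FT (f (Fin.last k)) ξ ≠ 0) : HasMonicRelationNear Λ k ξ := by
  choose φ hφ h_eq using fun i : Fin k ↦
    exists_FT_mul_eventuallyEq (hf (Fin.last k)) (hf i.castSucc) h₀
  refine ⟨φ, hφ, ?_⟩
  filter_upwards [eventually_all.2 h_eq,
    (continuous_FT (hf (Fin.last k))).continuousAt.eventually_ne h₀] with x hx hx₀ η hη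
  have h_sum := hΛ x η hη
  simp only [Fin.sum_univ_castSucc, Fin.val_castSucc, Fin.val_last, ← hx] at h_sum
  refine mul_right_cancel₀ hx₀ ?_
  calc (∑ i : Fin k, FT (φ i) x * cexpEta η ^ (i : ℕ)) * FT (f (Fin.last k)) x
      = ∑ i : Fin k, cexpEta η ^ (i : ℕ) * (FT (f (Fin.last k)) x * FT (φ i) x) := by
        rw [Finset.sum_mul]
        exact Finset.sum_congr rfl fun i _ ↦ by ring
    _ = -(cexpEta η ^ k) * FT (f (Fin.last k)) x := by linear_combination h_sum

theorem mem_projStarSu (h : HasMonicRelationNear Λ (n - 1) ξ) (hξ : ξ ∈ projExact Λ k) :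
    ξ ∈ projStarSu Λ n k := by
  obtain ⟨φ, hφ, h_eq⟩ := h
  obtain ⟨a, b, hab, h_sub⟩ := mem_nhds_iff_exists_Ioo_subset.1 h_eq
  exact ⟨hξ, a, b, hab, φ, hφ, fun x hx η hη ↦ h_sub hx.1 η hη.2⟩

end HasMonicRelationNear

theorem IsHUP.succ {Λ : Set (ℝ × ℝ)} {k : ℕ} (h : IsHUP k Λ)
    (h_lead : ∀ f : Fin (k + 1) → ℝ → ℂ, (∀ m, Integrable (f m)) →
      FTVanishesOn f Λ → FT (f (Fin.last k)) = 0) :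
    IsHUP (k + 1) Λ := by
  intro f hf hΛ
  have h_last := h_lead f hf hΛ
  refine Fin.lastCases (ae_eq_zero_of_FT_eq_zero (hf _) h_last)
    (h (fun m ↦ f m.castSucc) (fun m ↦ hf _) fun ξ η hη ↦ ?_)
  simpa [Fin.sum_univ_castSucc, h_last] using hΛ ξ η hη

theorem sufficient_part_general {n : ℕ} {Λ : Set (ℝ × ℝ)}
    (hdense : Dense (projAtLeast Λ n ∪ ⋃ k, projExact Λ k \ projStarSu Λ n k)) : IsHUP n Λ := by
  suffices ∀ k ≤ n, IsHUP k Λ from this n le_rfl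
  intro k
  induction k with
  | zero => exact fun _ _ _ _ m ↦ m.elim0
  | succ k ih =>
    intro hk
    refine (ih (by lia)).succ fun f hf hΛ ↦
      (continuous_FT (hf _)).ext_on hdense continuous_zero ?_
    rintro ξ (hξ | hξ)
    · exact hΛ.FT_eq_zero_of_mem_projAtLeast ⟨hξ.1, (Nat.cast_le.2 hk).trans hξ.2⟩ _
    · obtain ⟨j, hξj, hξ_star⟩ := Set.mem_iUnion.1 hξ
      by_contra h₀
      exact hξ_star (((HasMonicRelationNear.of_leading_ne_zero hf hΛ h₀).mono
        (by lia)).mem_projStarSu hξj)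

theorem projStarSu_one_subset_projOneStar (Λ : Set (ℝ × ℝ)) (n : ℕ) :
    projStarSu Λ n 1 ⊆ projOneStar Λ n := by
  rintro ξ ⟨hξ, a, b, hab, φ, hφ, h_eq⟩
  have h_img {x : ℝ} (hx : x ∈ projExact Λ 1) : Img Λ x = {sInf (Img Λ x)} := by
    obtain ⟨η, hη⟩ := Set.encard_eq_one.1 (by simpa using hx.2)
    rw [hη, csInf_singleton]
  refine ⟨hξ, fun x ↦ cexpEta (sInf (Img Λ x)), fun x hx η hη ↦ ?_, a, b, hab, φ, hφ,
    fun x hx ↦ ?_⟩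
  · rw [h_img hx] at hη
    rw [Set.mem_singleton_iff.1 hη]
  · rw [h_eq x hx _ (by rw [h_img hx.2]; simp), neg_add_cancel]

theorem union_projExact_diff_subset (Λ : Set (ℝ × ℝ)) (n : ℕ) :
    projAtLeast Λ n ∪ (projExact Λ 1 \ projOneStar Λ n) ∪
      (projExact Λ (n - 1) \ projStarSu Λ n (n - 1)) ∪
      (⋃ j ∈ Finset.Icc 2 (n - 2), (projExact Λ j \ projStarSu Λ n j)) ⊆
    projAtLeast Λ n ∪ ⋃ k, projExact Λ k \ projStarSu Λ n k := by
  have h_exact (k : ℕ) := Set.subset_iUnion (fun k ↦ projExact Λ k \ projStarSu Λ n k) k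
  refine Set.union_subset (Set.union_subset (Set.union_subset_union_right _ ?_) ?_) ?_
  · exact (Set.sdiff_subset_sdiff_right (projStarSu_one_subset_projOneStar Λ n)).trans (h_exact 1)
  · exact (h_exact (n - 1)).trans Set.subset_union_right
  · exact (Set.iUnion₂_subset fun j _ ↦ h_exact j).trans Set.subset_union_right

end HeisenbergUniqueness

theorem sufficient_part (n : ℕ) (hn : 2 ≤ n) (Λ : Set (ℝ × ℝ))
    (hclosed : IsClosed Λ) (hper : Periodic2 Λ)
    (hdense : Dense (projAtLeast Λ n ∪ (projExact Λ 1 \ projOneStar Λ n) ∪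
      (projExact Λ (n - 1) \ projStarSu Λ n (n - 1)) ∪
      ⋃ j ∈ Finset.Icc 2 (n - 2), (projExact Λ j \ projStarSu Λ n j))) :
    IsHUP n Λ :=
  sufficient_part_general <| hdense.mono <| union_projExact_diff_subset Λ n
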